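/- (Rate of convergence to the asymptotic momenta, equation (2.3)) Assume Assumption A(μ) with μ > 0. Let (y,η) : ℝ → ℝ^d × ℝ^d solve the Hamilton equations for k, and suppose there exist M, c, C > 0 such that |η(t)| ≤ M and |y(t)| ≥ c|t| − C for all t ∈ ℝ. Then the limits ξ± = lim_{t→±∞} η(t) exist, and there exists C' > 0 such that |η(t) − ξ₊| ≤ C'⟨t⟩^{−μ} for all t ≥ 0 and |η(t) − ξ₋| ≤ C'⟨t⟩^{−μ} for all t ≤ 0. -/

import Mathlib

open Filter MeasureTheory
open scoped Topology BigOperators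

noncomputable section

abbrev E (d : ℕ) := EuclideanSpace ℝ (Fin d)

/-- Japanese bracket `⟨x⟩ = (1+|x|²)^{1/2}`. -/
def jap {d : ℕ} (x : E d) : ℝ := Real.sqrt (1 + ‖x‖ ^ 2)

/-- Japanese bracket of a real number. -/
def japr (t : ℝ) : ℝ := Real.sqrt (1 + t ^ 2)

/-- The kinetic energy symbol `k(x,ξ) = (1/2) Σ a_{mn}(x) ξ_m ξ_n`. -/
def kk {d : ℕ} (a : Fin d → Fin d → E d → ℝ) (x ξ : E d) : ℝ :=
  (1 / 2) * ∑ m : Fin d, ∑ n : Fin d, a m n x * ξ m * ξ n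

/-- `(y, η)` solves the Hamilton equations for the Hamiltonian `h`. -/
def IsHamiltonSol {d : ℕ} (h : E d → E d → ℝ) (y η : ℝ → E d) : Prop :=
  ∀ t : ℝ, HasDerivAt y (gradient (h (y t)) (η t)) t ∧
    HasDerivAt η (-gradient (fun x => h x (η t)) (y t)) t

/-- Assumption A(μ): smoothness, symmetry, positive definiteness, and symbol-type decay. -/
def AssumptionA {d : ℕ} (μ : ℝ) (a : Fin d → Fin d → E d → ℝ) (V : E d → ℝ) : Prop :=
  (∀ m n, ContDiff ℝ (⊤ : ℕ∞) (a m n)) ∧ ContDiff ℝ (⊤ : ℕ∞) V ∧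
  (∀ m n x, a m n x = a n m x) ∧
  (∀ (x ξ : E d), ξ ≠ 0 → 0 < ∑ m : Fin d, ∑ n : Fin d, a m n x * ξ m * ξ n) ∧
  (∀ m n (j : ℕ), ∃ C > 0, ∀ x : E d,
    ‖iteratedFDeriv ℝ j (fun z => a m n z - if m = n then (1 : ℝ) else 0) x‖
      ≤ C * jap x ^ (-μ - (j : ℝ))) ∧
  (∀ j : ℕ, ∃ C > 0, ∀ x : E d,
    ‖iteratedFDeriv ℝ j V x‖ ≤ C * jap x ^ (2 - μ - (j : ℝ)))

/-! Along the flow `η' = -∂ₓk(y, η)` is quadratic in the bounded momentum, with coefficients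
`∂ₓa(y) = O(⟨y⟩^{-1-μ})`. As `y` escapes at least linearly, `η'(t) = O(⟨t⟩^{-1-μ})`, which is
integrable at `±∞`, and the tail of its integral is `O(⟨t⟩^{-μ})`. -/

section Convergence

variable {F : Type*} [NormedAddCommGroup F] [NormedSpace ℝ F]
  {f f' : ℝ → F} {B B' : ℝ → ℝ} {a b s t K μ : ℝ}

theorem norm_sub_le_sub_of_norm_deriv_le (hst : s ≤ t)
    (hf : ∀ u ∈ Set.Icc s t, HasDerivAt f (f' u) u)
    (hB : ∀ u ∈ Set.Icc s t, HasDerivAt B (B' u) u)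
    (hle : ∀ u ∈ Set.Ico s t, ‖f' u‖ ≤ B' u) : ‖f t - f s‖ ≤ B t - B s :=
  image_norm_le_of_norm_deriv_right_le_deriv_boundary'
    (f := fun u => f u - f s) (B := fun u => B u - B s)
    (fun u hu => ((hf u hu).sub_const _).continuousAt.continuousWithinAt)
    (fun u hu => ((hf u (Set.Ico_subset_Icc_self hu)).sub_const _).hasDerivWithinAt)
    (by simp)
    (fun u hu => ((hB u hu).sub_const _).continuousAt.continuousWithinAt)
    (fun u hu => ((hB u (Set.Ico_subset_Icc_self hu)).sub_const _).hasDerivWithinAt)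
    hle (Set.right_mem_Icc.2 hst)

theorem exists_tendsto_atTop_of_norm_deriv_le [CompleteSpace F]
    (hf : ∀ u ≥ a, HasDerivAt f (f' u) u) (hB : ∀ u ≥ a, HasDerivAt B (B' u) u)
    (hle : ∀ u ≥ a, ‖f' u‖ ≤ B' u) (hlim : Tendsto B atTop (𝓝 b)) :
    ∃ l, Tendsto f atTop (𝓝 l) ∧ ∀ t ≥ a, ‖f t - l‖ ≤ b - B t := by
  have incr_le : ∀ s ≥ a, ∀ t ≥ s, ‖f t - f s‖ ≤ B t - B s := fun s hs t hst =>
    norm_sub_le_sub_of_norm_deriv_le hst (fun u hu => hf u (hs.le.trans hu.1))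
      (fun u hu => hB u (hs.le.trans hu.1)) (fun u hu => hle u (hs.le.trans hu.1))
  have dist_le : ∀ s ≥ a, ∀ t ≥ a, dist (f s) (f t) ≤ dist (B s) (B t) := by
    intro s hs t ht
    rcases le_total s t with hst | hts
    · rw [dist_comm, dist_comm (B s), dist_eq_norm]
      exact (incr_le s hs t hst).trans (le_abs_self _)
    · rw [dist_eq_norm]
      exact (incr_le t ht s hts).trans (le_abs_self _)
  have cauchy : CauchySeq f := by
    rw [cauchySeq_iff_tendsto_dist_atTop_0]
    refine squeeze_zero' (.of_forall fun _ => dist_nonneg) ?_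
      (cauchySeq_iff_tendsto_dist_atTop_0.1 hlim.cauchySeq)
    filter_upwards [eventually_ge_atTop (a, a)] with p hp using dist_le p.1 hp.1 p.2 hp.2
  obtain ⟨l, hl⟩ := cauchySeq_tendsto_of_complete cauchy
  refine ⟨l, hl, fun t ht => ?_⟩
  rw [norm_sub_rev]
  refine le_of_tendsto_of_tendsto (hl.sub_const (f t)).norm (hlim.sub_const (B t)) ?_
  filter_upwards [eventually_ge_atTop t] with s hs using incr_le t ht s hs

theorem hasDerivAt_one_add_rpow_neg (hμ : μ ≠ 0) (ht : 1 + t ≠ 0) :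
    HasDerivAt (fun u : ℝ => -(K / μ) * (1 + u) ^ (-μ)) (K * (1 + t) ^ (-μ - 1)) t := by
  have hpow := (((hasDerivAt_id t).const_add 1).rpow_const (p := -μ)
    (.inl ht)).const_mul (-(K / μ))
  refine hpow.congr_deriv ?_
  simp only [id]
  field_simp

theorem exists_tendsto_atTop_of_norm_deriv_le_rpow [CompleteSpace F] (hμ : 0 < μ)
    (hf : ∀ t ≥ 0, HasDerivAt f (f' t) t)
    (hle : ∀ t ≥ 0, ‖f' t‖ ≤ K * (1 + |t|) ^ (-μ - 1)) :
    ∃ l, Tendsto f atTop (𝓝 l) ∧ ∀ t ≥ 0, ‖f t - l‖ ≤ K / μ * (1 + |t|) ^ (-μ) := by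
  have hlim : Tendsto (fun t : ℝ => -(K / μ) * (1 + t) ^ (-μ)) atTop (𝓝 0) := by
    simpa only [Function.comp_def, id, mul_zero] using ((tendsto_rpow_neg_atTop hμ).comp
      (tendsto_atTop_add_const_left _ 1 tendsto_id)).const_mul (-(K / μ))
  obtain ⟨l, hl, rate⟩ := exists_tendsto_atTop_of_norm_deriv_le hf
    (fun t ht => hasDerivAt_one_add_rpow_neg hμ.ne' (by positivity))
    (fun t ht => by simpa only [abs_of_nonneg ht] using hle t ht) hlim
  refine ⟨l, hl, fun t ht => (rate t ht).trans_eq ?_⟩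
  rw [abs_of_nonneg ht]
  ring

theorem exists_tendsto_atBot_of_norm_deriv_le_rpow [CompleteSpace F] (hμ : 0 < μ)
    (hf : ∀ t ≤ 0, HasDerivAt f (f' t) t)
    (hle : ∀ t ≤ 0, ‖f' t‖ ≤ K * (1 + |t|) ^ (-μ - 1)) :
    ∃ l, Tendsto f atBot (𝓝 l) ∧ ∀ t ≤ 0, ‖f t - l‖ ≤ K / μ * (1 + |t|) ^ (-μ) := by
  obtain ⟨l, hl, rate⟩ := exists_tendsto_atTop_of_norm_deriv_le_rpow
    (f := fun t => f (-t)) (f' := fun t => -f' (-t)) (K := K) hμ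
    (fun t ht => by
      simpa only [Function.comp_def, neg_one_smul] using
        (hf (-t) (neg_nonpos.2 ht)).scomp t (hasDerivAt_neg t))
    (fun t ht => by simpa only [norm_neg, abs_neg] using hle (-t) (neg_nonpos.2 ht))
  refine ⟨l, ?_, fun t ht => ?_⟩
  · simpa only [Function.comp_def, neg_neg] using hl.comp tendsto_neg_atBot_atTop
  · simpa only [neg_neg, abs_neg] using rate (-t) (neg_nonneg.2 ht)

end Convergence

section JapaneseBracket

variable {d : ℕ} {x : E d} {c C p t : ℝ}

theorem one_le_jap (x : E d) : 1 ≤ jap x :=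
  Real.one_le_sqrt.2 (le_add_of_nonneg_right (sq_nonneg _))

theorem norm_le_jap (x : E d) : ‖x‖ ≤ jap x :=
  Real.le_sqrt_of_sq_le (le_add_of_nonneg_left zero_le_one)

theorem japr_pos (t : ℝ) : 0 < japr t :=
  Real.sqrt_pos.2 (by positivity)

theorem japr_le_one_add_abs (t : ℝ) : japr t ≤ 1 + |t| :=
  Real.sqrt_le_iff.2 ⟨by positivity, by nlinarith [abs_nonneg t, sq_abs t]⟩

theorem mul_one_add_abs_le_jap (hc : 0 ≤ c) (hx : c * |t| - C ≤ ‖x‖) :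
    c / (1 + |C| + c) * (1 + |t|) ≤ jap x := by
  rw [div_mul_eq_mul_div, div_le_iff₀ (by positivity)]
  calc c * (1 + |t|) ≤ ‖x‖ + (|C| + c) * 1 := by linarith [le_abs_self C]
    _ ≤ jap x + (|C| + c) * jap x := by
      gcongr
      · exact norm_le_jap x
      · exact one_le_jap x
    _ = jap x * (1 + |C| + c) := by ring

theorem jap_rpow_le_mul_one_add_abs_rpow (hc : 0 < c) (hp : p ≤ 0)
    (hx : c * |t| - C ≤ ‖x‖) :
    jap x ^ p ≤ (c / (1 + |C| + c)) ^ p * (1 + |t|) ^ p := by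
  rw [← Real.mul_rpow (by positivity) (by positivity)]
  exact Real.rpow_le_rpow_of_nonpos (by positivity) (mul_one_add_abs_le_jap hc.le hx) hp

end JapaneseBracket

section KineticEnergy

variable {d : ℕ} {a : Fin d → Fin d → E d → ℝ} {x : E d} {p : ℝ}

theorem hasFDerivAt_kk_left (ha : ∀ m n, DifferentiableAt ℝ (a m n) x) (ξ : E d) :
    HasFDerivAt (fun z => kk a z ξ)
      ((1 / 2 : ℝ) • ∑ m, ∑ n, ξ n • ξ m • fderiv ℝ (a m n) x) x :=
  .const_mul (.fun_sum fun m _ => .fun_sum fun n _ =>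
    ((ha m n).hasFDerivAt.mul_const (ξ m)).mul_const (ξ n)) _

theorem norm_gradient_kk_left_le (ha : ∀ m n, DifferentiableAt ℝ (a m n) x) (ξ : E d) :
    ‖gradient (fun z => kk a z ξ) x‖
      ≤ 1 / 2 * (∑ m, ∑ n, ‖fderiv ℝ (a m n) x‖) * ‖ξ‖ ^ 2 := by
  have term_le (m n : Fin d) : ‖ξ n • ξ m • fderiv ℝ (a m n) x‖
      ≤ ‖fderiv ℝ (a m n) x‖ * ‖ξ‖ ^ 2 := by
    calc ‖ξ n • ξ m • fderiv ℝ (a m n) x‖ = ‖ξ n‖ * (‖ξ m‖ * ‖fderiv ℝ (a m n) x‖) := by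
          rw [norm_smul, norm_smul]
      _ ≤ ‖ξ‖ * (‖ξ‖ * ‖fderiv ℝ (a m n) x‖) := by
          gcongr <;> exact PiLp.norm_apply_le ξ _
      _ = ‖fderiv ℝ (a m n) x‖ * ‖ξ‖ ^ 2 := by ring
  rw [gradient, LinearIsometryEquiv.norm_map, (hasFDerivAt_kk_left ha ξ).fderiv, norm_smul,
    Real.norm_of_nonneg one_half_pos.le, mul_assoc]
  simp only [Finset.sum_mul]
  gcongr
  exact norm_sum_le_of_le _ fun m _ => norm_sum_le_of_le _ fun n _ => term_le m n

theorem exists_norm_gradient_kk_left_le (ha : ∀ m n, Differentiable ℝ (a m n))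
    (hdec : ∀ m n, ∃ D, ∀ x, ‖fderiv ℝ (a m n) x‖ ≤ D * jap x ^ p) (M : ℝ) :
    ∃ K > 0, ∀ x ξ : E d, ‖ξ‖ ≤ M → ‖gradient (fun z => kk a z ξ) x‖ ≤ K * jap x ^ p := by
  choose D hD using hdec
  set S : ℝ := 1 / 2 * ∑ m, ∑ n, |D m n|
  have hS : 0 ≤ S := by positivity
  refine ⟨S * M ^ 2 + 1, add_pos_of_nonneg_of_pos (mul_nonneg hS (sq_nonneg M)) one_pos,
    fun x ξ hξ => ?_⟩
  have hjap : 0 ≤ jap x ^ p := Real.rpow_nonneg (zero_le_one.trans (one_le_jap x)) _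
  have coeff_le : 1 / 2 * ∑ m, ∑ n, ‖fderiv ℝ (a m n) x‖ ≤ S * jap x ^ p := by
    simp only [S, mul_assoc, Finset.sum_mul]
    gcongr with m _ n _
    exact (hD m n x).trans (by gcongr; exact le_abs_self _)
  calc ‖gradient (fun z => kk a z ξ) x‖
      ≤ 1 / 2 * (∑ m, ∑ n, ‖fderiv ℝ (a m n) x‖) * ‖ξ‖ ^ 2 :=
        norm_gradient_kk_left_le (fun m n => ha m n x) ξ
    _ ≤ S * jap x ^ p * M ^ 2 := by gcongr
    _ ≤ (S * M ^ 2 + 1) * jap x ^ p := by linarith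

end KineticEnergy

namespace AssumptionA

variable {d : ℕ} {μ : ℝ} {a : Fin d → Fin d → E d → ℝ} {V : E d → ℝ}

theorem differentiable (hA : AssumptionA μ a V) (m n : Fin d) : Differentiable ℝ (a m n) :=
  (hA.1 m n).differentiable (by simp)

theorem exists_norm_fderiv_le (hA : AssumptionA μ a V) (m n : Fin d) :
    ∃ D, ∀ x, ‖fderiv ℝ (a m n) x‖ ≤ D * jap x ^ (-μ - 1) := by
  obtain ⟨-, -, -, -, hdec, -⟩ := hA
  obtain ⟨D, -, hD⟩ := hdec m n 1
  refine ⟨D, fun x => ?_⟩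
  simpa only [norm_iteratedFDeriv_one, fderiv_sub_const, Nat.cast_one] using hD x

end AssumptionA

theorem stmt4_general {d : ℕ} {μ : ℝ} (hμ : 0 < μ) {a : Fin d → Fin d → E d → ℝ}
    (ha : ∀ m n, Differentiable ℝ (a m n))
    (hdec : ∀ m n, ∃ D, ∀ x, ‖fderiv ℝ (a m n) x‖ ≤ D * jap x ^ (-μ - 1))
    {y η : ℝ → E d}
    (hη : ∀ t, HasDerivAt η (-gradient (fun x => kk a x (η t)) (y t)) t)
    {M c C : ℝ} (hc : 0 < c) (hηbd : ∀ t, ‖η t‖ ≤ M) (hnt : ∀ t, c * |t| - C ≤ ‖y t‖) :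
    ∃ ξp ξm : E d, Tendsto η atTop (𝓝 ξp) ∧ Tendsto η atBot (𝓝 ξm) ∧
      ∃ C' > 0, (∀ t : ℝ, 0 ≤ t → ‖η t - ξp‖ ≤ C' * japr t ^ (-μ)) ∧
        (∀ t : ℝ, t ≤ 0 → ‖η t - ξm‖ ≤ C' * japr t ^ (-μ)) := by
  obtain ⟨K, hK, hgrad⟩ := exists_norm_gradient_kk_left_le ha hdec M
  set L : ℝ := K * (c / (1 + |C| + c)) ^ (-μ - 1)
  have force_le (t : ℝ) :
      ‖-gradient (fun x => kk a x (η t)) (y t)‖ ≤ L * (1 + |t|) ^ (-μ - 1) := by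
    rw [norm_neg, mul_assoc]
    refine (hgrad (y t) (η t) (hηbd t)).trans ?_
    gcongr
    exact jap_rpow_le_mul_one_add_abs_rpow hc (by linarith) (hnt t)
  have rate_le (t : ℝ) : L / μ * (1 + |t|) ^ (-μ) ≤ L / μ * japr t ^ (-μ) := by
    gcongr L / μ * ?_
    exact Real.rpow_le_rpow_of_nonpos (japr_pos t) (japr_le_one_add_abs t) (by linarith)
  obtain ⟨ξp, hp, hp_rate⟩ := exists_tendsto_atTop_of_norm_deriv_le_rpow hμ
    (fun t _ => hη t) (fun t _ => force_le t)
  obtain ⟨ξm, hm, hm_rate⟩ := exists_tendsto_atBot_of_norm_deriv_le_rpow hμ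
    (fun t _ => hη t) (fun t _ => force_le t)
  exact ⟨ξp, ξm, hp, hm, L / μ, by positivity, fun t ht => (hp_rate t ht).trans (rate_le t),
    fun t ht => (hm_rate t ht).trans (rate_le t)⟩

/-- Rate of convergence to the asymptotic momenta (eq. (2.3)). -/
theorem stmt4 (d : ℕ) (hd : 1 ≤ d) (μ : ℝ) (hμ : 0 < μ)
    (a : Fin d → Fin d → E d → ℝ) (V : E d → ℝ) (hA : AssumptionA μ a V)
    (y η : ℝ → E d) (hHam : IsHamiltonSol (kk a) y η)
    (M c C : ℝ) (hM : 0 < M) (hc : 0 < c) (hC : 0 < C)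
    (hηbd : ∀ t : ℝ, ‖η t‖ ≤ M) (hnt : ∀ t : ℝ, c * |t| - C ≤ ‖y t‖) :
    ∃ ξp ξm : E d, Tendsto η atTop (𝓝 ξp) ∧ Tendsto η atBot (𝓝 ξm) ∧
      ∃ C' > 0, (∀ t : ℝ, 0 ≤ t → ‖η t - ξp‖ ≤ C' * japr t ^ (-μ)) ∧
        (∀ t : ℝ, t ≤ 0 → ‖η t - ξm‖ ≤ C' * japr t ^ (-μ)) :=
  stmt4_general hμ hA.differentiable hA.exists_norm_fderiv_le (fun t => (hHam t).2) hc hηbd hnt
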